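/- Let A ∈ ℝ^{n×n}, B ∈ ℝ^{n×q}, let X ∈ ℝ^{2n×2n} be a symmetric matrix with blocks X¹¹, X¹², X²¹ = (X¹²)ᵀ, X²² ∈ ℝ^{n×n} such that X²² is negative definite, let P ∈ ℝ^{n×n} be symmetric positive definite, K ∈ ℝ^{q×n}, and define L = KP⁻¹. Then the 3n×3n block matrix [[−(X²²)⁻¹, P, 0], [P, −((AP + BK) + (AP + BK)ᵀ), −I + PX²¹], [0, −I + X¹²P, X¹¹]] is positive semidefinite if and only if for all x, η ∈ ℝⁿ: 2xᵀP⁻¹((A + BL)x + η) ≤ ηᵀX¹¹η + 2ηᵀX¹²x + xᵀX²²x. -/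

import Mathlib

open Matrix

/-- LMI-based synthesis of a local state-feedback gain `L = KP⁻¹` enforcing
X-dissipativity (with `X²² ≺ 0`) of `ẋ = (A + BL)x + η`, `y = x`, with storage
`V(x) = xᵀP⁻¹x`. -/
theorem local_controller_synthesis_LMI {n q : ℕ}
    (A : Matrix (Fin n) (Fin n) ℝ) (B : Matrix (Fin n) (Fin q) ℝ)
    (X11 X12 X22 : Matrix (Fin n) (Fin n) ℝ)
    (hX11 : X11.IsSymm) (hX22 : X22.IsSymm) (hX22neg : (-X22).PosDef)
    (P : Matrix (Fin n) (Fin n) ℝ) (hP : P.PosDef)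
    (K Lg : Matrix (Fin q) (Fin n) ℝ) (hL : Lg = K * P⁻¹) :
    (Matrix.fromBlocks
      (-(X22⁻¹)) (Matrix.fromCols P 0)
      (Matrix.fromRows P 0)
      (Matrix.fromBlocks
        (-((A * P + B * K) + (A * P + B * K)ᵀ)) (-1 + P * X12ᵀ)
        (-1 + X12 * P) X11)).PosSemidef ↔
    ∀ x η : Fin n → ℝ,
      2 * (x ⬝ᵥ (P⁻¹ *ᵥ ((A + B * Lg) *ᵥ x + η))) ≤
        η ⬝ᵥ (X11 *ᵥ η) + 2 * (η ⬝ᵥ (X12 *ᵥ x)) + x ⬝ᵥ (X22 *ᵥ x) := by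
  have hPt : Pᵀ = P := by
    have := hP.isHermitian.eq
    rwa [conjTranspose_eq_transpose_of_trivial] at this
  have hPu : IsUnit P.det := (Matrix.isUnit_iff_isUnit_det P).1 hP.isUnit
  have hXu : IsUnit (-X22).det := (Matrix.isUnit_iff_isUnit_det _).1 hX22neg.isUnit
  have hinv : -(X22⁻¹) = (-X22)⁻¹ := by
    symm
    apply Matrix.inv_eq_right_inv
    have hu : IsUnit X22.det := by
      have h2 : IsUnit X22 := by simpa using hX22neg.isUnit.neg
      exact (Matrix.isUnit_iff_isUnit_det _).1 h2
    rw [neg_mul_neg, Matrix.mul_nonsing_inv _ hu]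
  have hrows : Matrix.fromRows P (0 : Matrix (Fin n) (Fin n) ℝ) = (Matrix.fromCols P 0)ᴴ := by
    rw [conjTranspose_eq_transpose_of_trivial, transpose_fromCols, hPt, transpose_zero]
  have : Invertible (-X22)⁻¹ := Matrix.invertibleOfIsUnitDet _
    ((Matrix.isUnit_iff_isUnit_det _).1 hX22neg.inv.isUnit)
  rw [hinv, hrows, Matrix.PosDef.fromBlocks₁₁ _ _ hX22neg.inv, ← hrows,
    Matrix.nonsing_inv_nonsing_inv _ hXu]
  have hS : Matrix.fromRows P (0 : Matrix (Fin n) (Fin n) ℝ) * (-X22) *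
        Matrix.fromCols P (0 : Matrix (Fin n) (Fin n) ℝ)
      = Matrix.fromBlocks (P * (-X22) * P) 0 0 0 := by
    rw [Matrix.fromRows_mul, Matrix.fromRows_mul_fromCols]
    simp
  rw [hS, sub_eq_add_neg, Matrix.fromBlocks_neg, Matrix.fromBlocks_add,
    Matrix.posSemidef_iff_dotProduct_mulVec]
  have key : ∀ z η : Fin n → ℝ,
      (Sum.elim z η) ⬝ᵥ ((Matrix.fromBlocks
        (-((A * P + B * K) + (A * P + B * K)ᵀ) + -(P * (-X22) * P)) (-1 + P * X12ᵀ + -0)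
        (-1 + X12 * P + -0) (X11 + -0)) *ᵥ (Sum.elim z η)) =
      (η ⬝ᵥ (X11 *ᵥ η) + 2 * (η ⬝ᵥ (X12 *ᵥ (P *ᵥ z))) + (P *ᵥ z) ⬝ᵥ (X22 *ᵥ (P *ᵥ z))) -
      2 * ((P *ᵥ z) ⬝ᵥ (P⁻¹ *ᵥ ((A + B * Lg) *ᵥ (P *ᵥ z) + η))) := by
    intro z η
    have h1 : ∀ v, (P *ᵥ z) ⬝ᵥ (P⁻¹ *ᵥ v) = z ⬝ᵥ v := by
      intro v
      rw [← vecMul_transpose, hPt, ← dotProduct_mulVec, mulVec_mulVec,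
        Matrix.mul_nonsing_inv _ hPu, one_mulVec]
    have h2 : (A + B * Lg) *ᵥ (P *ᵥ z) = (A * P + B * K) *ᵥ z := by
      rw [mulVec_mulVec, hL, Matrix.add_mul, Matrix.mul_assoc, Matrix.mul_assoc,
        Matrix.nonsing_inv_mul _ hPu, Matrix.mul_one]
    have h3 : (P *ᵥ z) ⬝ᵥ (X22 *ᵥ (P *ᵥ z)) = z ⬝ᵥ ((P * X22 * P) *ᵥ z) := by
      have h0 : ∀ v, (P *ᵥ z) ⬝ᵥ v = z ⬝ᵥ (P *ᵥ v) := by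
        intro v
        rw [dotProduct_mulVec, ← mulVec_transpose, hPt]
      rw [h0, mulVec_mulVec, mulVec_mulVec]
    have h4 : ∀ M : Matrix (Fin n) (Fin n) ℝ, ∀ u v, u ⬝ᵥ (Mᵀ *ᵥ v) = v ⬝ᵥ (M *ᵥ u) := by
      intro M u v
      rw [mulVec_transpose, dotProduct_comm, ← dotProduct_mulVec]
    have h5 : P * X12ᵀ = (X12 * P)ᵀ := by rw [transpose_mul, hPt]
    rw [h1, h2, h3, h5, mulVec_mulVec, Matrix.fromBlocks_mulVec]
    simp only [Sum.elim_comp_inl, Sum.elim_comp_inr, sumElim_dotProduct_sumElim, neg_zero,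
      add_zero, Matrix.mul_neg, Matrix.neg_mul, neg_neg]
    simp only [add_mulVec, neg_mulVec, one_mulVec, dotProduct_add, dotProduct_neg, h4,
      transpose_add]
    rw [dotProduct_comm η z]
    ring
  constructor
  · rintro ⟨-, h⟩ x η
    have h0 := h (Sum.elim (P⁻¹ *ᵥ x) η)
    have hx : P *ᵥ (P⁻¹ *ᵥ x) = x := by
      rw [mulVec_mulVec, Matrix.mul_nonsing_inv _ hPu, one_mulVec]
    rw [star_trivial, key, hx] at h0
    linarith
  · intro h
    refine ⟨?_, fun w => ?_⟩
    · rw [Matrix.isHermitian_fromBlocks_iff]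
      simp only [IsHermitian, conjTranspose_eq_transpose_of_trivial, transpose_add,
        transpose_neg, transpose_mul, transpose_transpose, hPt, hX22.eq, hX11.eq,
        transpose_one, transpose_zero, neg_zero, add_zero, and_true, true_and]
      simp only [Matrix.mul_assoc]
      abel
    · rw [star_trivial, ← Sum.elim_comp_inl_inr w, key]
      have := h (P *ᵥ (w ∘ Sum.inl)) (w ∘ Sum.inr)
      linarith
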